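/- arXiv:1304.6607 — 2 statements merged into one kernel-verified Lean document; each statement's English description precedes it below -/
import Mathlib

section
/- Let L ⊆ ℤ^m be a nonzero positive lattice. Let C be the set of all E ⊆ {1,…,m} such that E = supp(u⁺) or E = supp(u⁻) for some circuit u of Sat(L), and let C_min be the set of minimal elements of C with respect to inclusion. Then T_min = C_min. -/
/-!
Call two exponents congruent if they differ by an element of `L`; since `I_L` is contained in the
kernel of `K[x] → K[ℤ^m / L]`, a binomial `x^p - x^q` lies in `I_L` exactly when `p` and `q` are
congruent. Let `S` be the set of exponents congruent to some other exponent. An indispensable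
monomial has exponent in `S`, because the nonzero binomials `x^(u⁺) - x^(u⁻)` generate `I_L`.
Conversely every minimal element `w` of `S` is indispensable: binomials of `I_L` not involving
`x^w` lie in the monomial ideal generated by the `x^v` with `v ∈ S`, `v ≠ w`, and that ideal
contains no polynomial in which `x^w` occurs.

So if `x^w` is indispensable, then `w = u⁺ + r` for some nonzero `u ∈ L` and `r ≥ 0`, and a circuit
conformal to `u` has positive part supported in `supp w`. In the other direction, if `c` is a
circuit, then `n c ∈ L` for some `n > 0`, and a minimal element of `S` below `n c⁺` is an
indispensable exponent supported in `supp c⁺`. Hence every member of `T` contains a member of `C`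
and vice versa, so that `T` and `C` have the same minimal elements.
-/

open MvPolynomial

variable (K : Type*) [Field K]

/-- The monomial `x^w`. -/
noncomputable def mono {m : ℕ} (w : Fin m → ℕ) : MvPolynomial (Fin m) K :=
  ∏ i, X i ^ w i

/-- The positive part `u⁺` of an integer vector. -/
def intPos {m : ℕ} (u : Fin m → ℤ) : Fin m → ℕ := fun i => (u i).toNat

/-- The negative part `u⁻` of an integer vector. -/
def intNeg {m : ℕ} (u : Fin m → ℤ) : Fin m → ℕ := fun i => (-u i).toNat

/-- Support of a vector of naturals. -/
def suppN {m : ℕ} (w : Fin m → ℕ) : Set (Fin m) := {i | w i ≠ 0}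

/-- Support of a vector of integers. -/
def suppZ {m : ℕ} (u : Fin m → ℤ) : Set (Fin m) := {i | u i ≠ 0}

/-- The lattice ideal `I_L`. -/
noncomputable def latticeIdeal {m : ℕ} (L : AddSubgroup (Fin m → ℤ)) :
    Ideal (MvPolynomial (Fin m) K) :=
  Ideal.span {f | ∃ u ∈ L, f = mono K (intPos u) - mono K (intNeg u)}

/-- A binomial: a difference of two monomials. -/
def IsBinomial {m : ℕ} (f : MvPolynomial (Fin m) K) : Prop :=
  ∃ u v : Fin m → ℕ, f = mono K u - mono K v

/-- `x^w` is an indispensable monomial of `I_L`: every binomial generating set of `I_L`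
contains a binomial one of whose monomials is `x^w`. -/
def IsIndispMonomial {m : ℕ} (L : AddSubgroup (Fin m → ℤ)) (w : Fin m → ℕ) : Prop :=
  ∀ B : Set (MvPolynomial (Fin m) K), (∀ f ∈ B, IsBinomial K f) →
    Ideal.span B = latticeIdeal K L →
    ∃ f ∈ B, ∃ v : Fin m → ℕ, f = mono K w - mono K v ∨ f = mono K v - mono K w

/-- The set `T` of supports of indispensable monomials of `I_L`. -/
def Tsupp {m : ℕ} (L : AddSubgroup (Fin m → ℤ)) : Set (Set (Fin m)) :=
  {E | ∃ w : Fin m → ℕ, IsIndispMonomial K L w ∧ E = suppN w}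

/-- `T_min`, the set of minimal elements of `T` with respect to inclusion. -/
def Tmin {m : ℕ} (L : AddSubgroup (Fin m → ℤ)) : Set (Set (Fin m)) :=
  {E ∈ Tsupp K L | ∀ E' ∈ Tsupp K L, E' ⊆ E → E' = E}

/-- The saturation `Sat(L)` of the lattice `L`. -/
def satL {m : ℕ} (L : AddSubgroup (Fin m → ℤ)) : Set (Fin m → ℤ) :=
  {u | ∃ d : ℤ, d ≠ 0 ∧ d • u ∈ L}

/-- A circuit of `Sat(L)`: a nonzero element of `Sat(L)` of minimal support
whose coordinates are relatively prime. -/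
def IsCircuit {m : ℕ} (L : AddSubgroup (Fin m → ℤ)) (u : Fin m → ℤ) : Prop :=
  u ≠ 0 ∧ u ∈ satL L ∧
    (∀ v ∈ satL L, v ≠ 0 → suppZ v ⊆ suppZ u → suppZ v = suppZ u) ∧
    Finset.univ.gcd (fun i => (u i).natAbs) = 1

/-- The set `C` of supports of positive or negative parts of circuits of `Sat(L)`. -/
def Csupp {m : ℕ} (L : AddSubgroup (Fin m → ℤ)) : Set (Set (Fin m)) :=
  {E | ∃ u : Fin m → ℤ, IsCircuit L u ∧
    (E = suppN (intPos u) ∨ E = suppN (intNeg u))}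

/-- `C_min`, the set of minimal elements of `C` with respect to inclusion. -/
def Cmin {m : ℕ} (L : AddSubgroup (Fin m → ℤ)) : Set (Set (Fin m)) :=
  {E ∈ Csupp L | ∀ E' ∈ Csupp L, E' ⊆ E → E' = E}

section MinimalElements

theorem minimal_iff_minimal_of_forall_exists_le {α : Type*} [PartialOrder α] {P Q : α → Prop}
    {x : α} (hPQ : ∀ x, P x → ∃ y ≤ x, Q y) (hQP : ∀ x, Q x → ∃ y ≤ x, P y) :
    Minimal P x ↔ Minimal Q x := by
  have hP : Minimal (fun y ↦ P y ∨ Q y) x ↔ Minimal P x :=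
    minimal_iff_minimal_of_imp_of_forall (fun _ ↦ .inl) fun y hy ↦
      hy.elim (fun h ↦ ⟨y, le_rfl, h⟩) (hQP y)
  have hQ : Minimal (fun y ↦ P y ∨ Q y) x ↔ Minimal Q x :=
    minimal_iff_minimal_of_imp_of_forall (fun _ ↦ .inr) fun y hy ↦
      hy.elim (hPQ y) (fun h ↦ ⟨y, le_rfl, h⟩)
  exact hP.symm.trans hQ

variable {K} {m : ℕ} {L : AddSubgroup (Fin m → ℤ)} {E : Set (Fin m)}

theorem mem_Tmin_iff_minimal : E ∈ Tmin K L ↔ Minimal (· ∈ Tsupp K L) E := by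
  simp only [Tmin, Set.mem_sep_iff, minimal_iff, eq_comm]

theorem mem_Cmin_iff_minimal : E ∈ Cmin L ↔ Minimal (· ∈ Csupp L) E := by
  simp only [Cmin, Set.mem_sep_iff, minimal_iff, eq_comm]

end MinimalElements

section Conformal

/-- `u` is conformal to `v`: every nonzero coordinate of `u` has the same sign as the corresponding
coordinate of `v`. -/
def IsConformal {ι R : Type*} [Zero R] [LT R] (u v : ι → R) : Prop :=
  ∀ i, (0 < u i → 0 < v i) ∧ (u i < 0 → v i < 0)

namespace IsConformal

theorem refl {ι R : Type*} [Zero R] [LT R] (u : ι → R) : IsConformal u u :=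
  fun _ ↦ ⟨id, id⟩

theorem trans {ι R : Type*} [Zero R] [LT R] {u v w : ι → R} (huv : IsConformal u v)
    (hvw : IsConformal v w) : IsConformal u w :=
  fun i ↦ ⟨(hvw i).1 ∘ (huv i).1, (hvw i).2 ∘ (huv i).2⟩

theorem support_subset {ι R : Type*} [Zero R] [LinearOrder R] {u v : ι → R}
    (h : IsConformal u v) : u.support ⊆ v.support := by
  intro i hi
  rcases lt_or_gt_of_ne hi with hneg | hpos
  · exact ((h i).2 hneg).ne
  · exact ((h i).1 hpos).ne'

theorem suppN_intPos_subset {m : ℕ} {u v : Fin m → ℤ} (h : IsConformal u v) :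
    suppN (intPos u) ⊆ suppN (intPos v) := by
  intro i
  have := (h i).1
  simp only [suppN, intPos, Set.mem_ofPred_eq]
  omega

end IsConformal

theorem isConformal_smul {ι R : Type*} [Semiring R] [LinearOrder R] [IsStrictOrderedRing R]
    {a : R} (ha : 0 < a) (u : ι → R) : IsConformal u (a • u) :=
  fun _ ↦ ⟨mul_pos ha, mul_neg_of_pos_of_neg ha⟩

theorem isConformal_of_mul_nonneg {ι R : Type*} [Ring R] [LinearOrder R] [IsStrictOrderedRing R]
    {u v : ι → R} (hsupp : u.support ⊆ v.support) (h : ∀ i, 0 ≤ v i * u i) :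
    IsConformal u v := by
  refine fun i ↦ ⟨fun hi ↦ ?_, fun hi ↦ ?_⟩
  · exact (nonneg_of_mul_nonneg_left (h i) hi).lt_of_ne' (hsupp hi.ne')
  · exact (nonpos_of_mul_nonneg_left (h i) hi).lt_of_ne (hsupp hi.ne)

/-- Eliminating the coordinate that minimizes `|u i| / |v i|` among those where `u` and `v` have the
same sign preserves the signs of `u`. -/
theorem exists_conformal_elimination_of_mul_pos {ι : Type*} [Finite ι] {u v : ι → ℤ}
    (hsupp : v.support ⊆ u.support) (hpos : ∃ i, 0 < u i * v i) :
    ∃ a b : ℤ, a ≠ 0 ∧ IsConformal (a • u - b • v) u ∧ ∃ i, u i ≠ 0 ∧ (a • u - b • v) i = 0 := by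
  obtain ⟨i, hi : 0 < u i * v i, hmin⟩ := Set.exists_min_image {i | 0 < u i * v i}
    (fun i ↦ (|u i| : ℚ) / |v i|) (Set.toFinite _) hpos
  have hui : u i ≠ 0 := left_ne_zero_of_mul (ne_of_gt hi)
  have hvi : v i ≠ 0 := right_ne_zero_of_mul (ne_of_gt hi)
  have hratio : ∀ k, 0 < u k * v k → |u i| * |v k| ≤ |u k| * |v i| := by
    intro k hk
    have hvk : v k ≠ 0 := right_ne_zero_of_mul (ne_of_gt hk)
    have hdiv := hmin k hk
    rw [div_le_div_iff₀ (by positivity) (by positivity)] at hdiv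
    exact_mod_cast hdiv
  refine ⟨|v i|, |u i|, abs_ne_zero.mpr hvi, isConformal_of_mul_nonneg ?_ fun k ↦ ?_, i, hui, ?_⟩
  · intro k hk huk
    have hvk : v k = 0 := by_contra fun hvk ↦ hsupp hvk huk
    simp [huk, hvk] at hk
  · suffices |u i| * (u k * v k) ≤ |v i| * (u k * u k) by
      simp only [Pi.sub_apply, Pi.smul_apply, smul_eq_mul]
      linarith
    rcases le_or_gt (u k * v k) 0 with hk | hk
    · exact (mul_nonpos_of_nonneg_of_nonpos (abs_nonneg _) hk).trans
        (mul_nonneg (abs_nonneg _) (mul_self_nonneg _))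
    · calc |u i| * (u k * v k) = |u k| * (|u i| * |v k|) := by
            rw [← abs_of_pos hk, abs_mul]; ring
        _ ≤ |u k| * (|u k| * |v i|) := mul_le_mul_of_nonneg_left (hratio k hk) (abs_nonneg _)
        _ = |v i| * (u k * u k) := by rw [← abs_mul_abs_self (u k)]; ring
  · rcases pos_and_pos_or_neg_and_neg_of_mul_pos hi with ⟨hu, hv⟩ | ⟨hu, hv⟩
    · simp [abs_of_pos hu, abs_of_pos hv, mul_comm]
    · simp [abs_of_neg hu, abs_of_neg hv, mul_comm]

theorem exists_conformal_elimination {ι : Type*} [Finite ι] {u v : ι → ℤ} (hv : v ≠ 0)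
    (hsupp : v.support ⊆ u.support) :
    ∃ a b : ℤ, a ≠ 0 ∧ IsConformal (a • u - b • v) u ∧ ∃ i, u i ≠ 0 ∧ (a • u - b • v) i = 0 := by
  obtain ⟨i, hvi⟩ := Function.ne_iff.mp hv
  rcases lt_or_gt_of_ne (mul_ne_zero (hsupp hvi) hvi) with hneg | hpos
  · obtain ⟨a, b, h⟩ := exists_conformal_elimination_of_mul_pos (u := u) (v := -v)
      (by rwa [Function.support_neg]) ⟨i, by simpa using hneg⟩
    exact ⟨a, -b, by simpa only [neg_smul, smul_neg] using h⟩
  · exact exists_conformal_elimination_of_mul_pos hsupp ⟨i, hpos⟩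

end Conformal

section Circuits

/-- The saturation of a subgroup `L` of an abelian group as a subgroup: the elements of finite order
modulo `L`. For `G = ℤ^m` its underlying set is `satL L`, see `mem_satL_iff`. -/
def saturation {G : Type*} [AddCommGroup G] (L : AddSubgroup G) : AddSubgroup G :=
  (AddCommGroup.torsion (G ⧸ L)).comap (QuotientAddGroup.mk' L)

theorem mem_saturation_iff_exists_nsmul {G : Type*} [AddCommGroup G] {L : AddSubgroup G} {u : G} :
    u ∈ saturation L ↔ ∃ n : ℕ, 0 < n ∧ n • u ∈ L := by
  simp only [saturation, AddSubgroup.mem_comap, AddCommGroup.mem_torsion,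
    isOfFinAddOrder_iff_nsmul_eq_zero, ← map_nsmul, ← AddMonoidHom.mem_ker,
    QuotientAddGroup.ker_mk']

theorem le_saturation {G : Type*} [AddCommGroup G] (L : AddSubgroup G) : L ≤ saturation L :=
  fun u hu ↦ mem_saturation_iff_exists_nsmul.mpr ⟨1, one_pos, by rwa [one_nsmul]⟩

variable {m : ℕ} {L : AddSubgroup (Fin m → ℤ)} {u v : Fin m → ℤ}

theorem mem_satL_iff : u ∈ satL L ↔ u ∈ saturation L := by
  simp only [satL, saturation, AddSubgroup.mem_comap, AddCommGroup.mem_torsion,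
    isOfFinAddOrder_iff_zsmul_eq_zero, ← map_zsmul, ← AddMonoidHom.mem_ker,
    QuotientAddGroup.ker_mk', Set.mem_ofPred_eq]

theorem mem_satL_of_zsmul_mem {a : ℤ} (ha : a ≠ 0) (h : a • u ∈ satL L) : u ∈ satL L := by
  obtain ⟨d, hd, hdu⟩ := h
  exact ⟨d * a, mul_ne_zero hd ha, by rwa [mul_smul]⟩

theorem exists_conformal_suppZ_ssubset (hu : u ∈ satL L) (hv : v ∈ satL L) (hv0 : v ≠ 0)
    (hvu : suppZ v ⊂ suppZ u) :
    ∃ w ∈ satL L, w ≠ 0 ∧ IsConformal w u ∧ suppZ w ⊂ suppZ u := by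
  obtain ⟨a, b, ha, hconf, i, hui, hi⟩ := exists_conformal_elimination hv0 hvu.subset
  obtain ⟨j, huj, hvj⟩ := Set.exists_of_ssubset hvu
  rw [mem_satL_iff] at hu hv
  refine ⟨a • u - b • v, ?_, ?_, hconf, ?_⟩
  · rw [mem_satL_iff]
    exact sub_mem (zsmul_mem hu a) (zsmul_mem hv b)
  · refine Function.ne_iff.mpr ⟨j, ?_⟩
    have hvj : v j = 0 := not_not.mp hvj
    simpa [hvj, ha] using show u j ≠ 0 from huj
  · exact (Set.ssubset_iff_of_subset hconf.support_subset).mpr ⟨i, hui, not_not.mpr hi⟩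

theorem exists_pos_zsmul_eq_and_gcd_natAbs_eq_one {ι : Type*} [Fintype ι] {u : ι → ℤ}
    (hu : u ≠ 0) :
    ∃ g : ℤ, 0 < g ∧ ∃ c : ι → ℤ, g • c = u ∧ Finset.univ.gcd (fun i ↦ (c i).natAbs) = 1 := by
  obtain ⟨i, hi⟩ := Function.ne_iff.mp hu
  obtain ⟨c, hc, hgcd⟩ := Finset.extract_gcd u ⟨i, Finset.mem_univ i⟩
  have hg : Finset.univ.gcd u ≠ 0 := fun h ↦ hi (Finset.gcd_eq_zero_iff.mp h i (Finset.mem_univ i))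
  refine ⟨Finset.univ.gcd u, (Int.nonneg_of_normalize_eq_self Finset.normalize_gcd).lt_of_ne' hg,
    c, funext fun j ↦ (hc j (Finset.mem_univ j)).symm, ?_⟩
  have hdvd : ((Finset.univ.gcd fun i ↦ (c i).natAbs : ℕ) : ℤ) ∣ Finset.univ.gcd c :=
    Finset.dvd_gcd fun j hj ↦ Int.natCast_dvd.mpr (Finset.gcd_dvd hj)
  rw [hgcd] at hdvd
  exact_mod_cast Int.eq_one_of_dvd_one (Int.natCast_nonneg _) hdvd

theorem exists_isCircuit_conformal_of_minimal_suppZ (hu : u ∈ satL L) (hu0 : u ≠ 0)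
    (hmin : ∀ v ∈ satL L, v ≠ 0 → suppZ v ⊆ suppZ u → suppZ v = suppZ u) :
    ∃ c, IsCircuit L c ∧ IsConformal c u := by
  obtain ⟨g, hg, c, rfl, hgcd⟩ := exists_pos_zsmul_eq_and_gcd_natAbs_eq_one hu0
  have hsupp : suppZ (g • c) = suppZ c := Function.support_const_smul_of_ne_zero g c hg.ne'
  rw [hsupp] at hmin
  exact ⟨c, ⟨right_ne_zero_of_smul hu0, mem_satL_of_zsmul_mem hg.ne' hu, hmin, hgcd⟩,
    isConformal_smul hg c⟩

theorem exists_isCircuit_conformal (hu : u ∈ satL L) (hu0 : u ≠ 0) :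
    ∃ c, IsCircuit L c ∧ IsConformal c u := by
  obtain ⟨w, ⟨hw, hw0, hwu⟩, hmin⟩ := exists_minimalFor_of_wellFoundedLT
    (fun w ↦ w ∈ satL L ∧ w ≠ 0 ∧ IsConformal w u) suppZ ⟨u, hu, hu0, .refl u⟩
  obtain ⟨c, hc, hcw⟩ := exists_isCircuit_conformal_of_minimal_suppZ hw hw0 <| by
    intro v hv hv0 hvw
    by_contra hne
    obtain ⟨w', hw', hw'0, hconf, hlt⟩ :=
      exists_conformal_suppZ_ssubset hw hv hv0 (hvw.ssubset_of_ne hne)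
    exact hlt.not_subset (hmin ⟨hw', hw'0, hconf.trans hwu⟩ hlt.subset)
  exact ⟨c, hc, hcw.trans hwu⟩

end Circuits

section LatticeIdeal

variable {K} {m : ℕ} {L : AddSubgroup (Fin m → ℤ)} {p q : Fin m → ℕ}

/-- The `L`-degree of an exponent `w`, i.e. its class in `ℤ^m / L`. Monomials of equal degree are
those whose difference lies in `I_L`, see `mono_sub_mono_mem_latticeIdeal_iff`. -/
def latticeDegree (L : AddSubgroup (Fin m → ℤ)) : (Fin m → ℕ) →+ (Fin m → ℤ) ⧸ L :=
  (QuotientAddGroup.mk' L).comp ((Nat.castAddMonoidHom ℤ).compLeft (Fin m))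

theorem latticeDegree_eq_iff :
    latticeDegree L p = latticeDegree L q ↔ (fun i ↦ (p i : ℤ) - q i) ∈ L := by
  rw [eq_comm, latticeDegree, AddMonoidHom.comp_apply, AddMonoidHom.comp_apply,
    QuotientAddGroup.mk'_apply, QuotientAddGroup.mk'_apply, QuotientAddGroup.eq,
    neg_add_eq_sub]
  rfl

theorem latticeDegree_intPos_eq_intNeg_iff {u : Fin m → ℤ} :
    latticeDegree L (intPos u) = latticeDegree L (intNeg u) ↔ u ∈ L := by
  simp only [latticeDegree_eq_iff, intPos, intNeg, Int.toNat_sub_toNat_neg]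

theorem mono_eq_monomial (w : Fin m → ℕ) :
    mono K w = monomial (Finsupp.equivFunOnFinite.symm w) 1 := by
  rw [monomial_eq, C_1, one_mul, Finsupp.prod_fintype _ _ fun _ ↦ pow_zero _]
  rfl

theorem mono_add (p q : Fin m → ℕ) : mono K (p + q) = mono K p * mono K q := by
  simp only [mono, Pi.add_apply, pow_add, Finset.prod_mul_distrib]

theorem latticeDegree_eq_of_mono_sub_mono_mem (h : mono K p - mono K q ∈ latticeIdeal K L) :
    latticeDegree L p = latticeDegree L q := by
  let φ := AddMonoidAlgebra.mapDomainRingHom K ((latticeDegree L).comp Finsupp.coeFnAddHom)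
  have hφ (w : Fin m → ℕ) : φ (mono K w) = AddMonoidAlgebra.single (latticeDegree L w) 1 := by
    rw [mono_eq_monomial, ← single_eq_monomial]
    exact AddMonoidAlgebra.mapDomain_single
  have hker : latticeIdeal K L ≤ RingHom.ker φ := by
    rw [latticeIdeal, Ideal.span_le]
    rintro _ ⟨u, hu, rfl⟩
    rw [SetLike.mem_coe, RingHom.sub_mem_ker_iff, hφ, hφ,
      latticeDegree_intPos_eq_intNeg_iff.mpr hu]
  have hpq : φ (mono K p) = φ (mono K q) := (RingHom.sub_mem_ker_iff φ).mp (hker h)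
  rw [hφ, hφ] at hpq
  exact AddMonoidAlgebra.single_left_injective one_ne_zero hpq

theorem mono_sub_mono_mem_of_latticeDegree_eq (h : latticeDegree L p = latticeDegree L q) :
    mono K p - mono K q ∈ latticeIdeal K L := by
  set u : Fin m → ℤ := fun i ↦ (p i : ℤ) - q i with hu
  have hp : p = p ⊓ q + intPos u := by
    ext i; simp only [hu, intPos, Pi.add_apply, Pi.inf_apply]; omega
  have hq : q = p ⊓ q + intNeg u := by
    ext i; simp only [hu, intNeg, Pi.add_apply, Pi.inf_apply]; omega
  have hsub : mono K p - mono K q = mono K (p ⊓ q) * (mono K (intPos u) - mono K (intNeg u)) := by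
    rw [mul_sub, ← mono_add, ← mono_add, ← hp, ← hq]
  rw [hsub]
  exact Ideal.mul_mem_left _ _ (Ideal.subset_span ⟨u, latticeDegree_eq_iff.mp h, rfl⟩)

theorem mono_sub_mono_mem_latticeIdeal_iff :
    mono K p - mono K q ∈ latticeIdeal K L ↔ latticeDegree L p = latticeDegree L q :=
  ⟨latticeDegree_eq_of_mono_sub_mono_mem, mono_sub_mono_mem_of_latticeDegree_eq⟩

theorem exists_le_of_mono_sub_mono_mem_span_mono {S : Set (Fin m → ℕ)} (hne : p ≠ q)
    (h : mono K p - mono K q ∈ Ideal.span (mono K '' S)) : ∃ s ∈ S, s ≤ p := by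
  let e : (Fin m →₀ ℕ) ≃ (Fin m → ℕ) := Finsupp.equivFunOnFinite
  have hS : mono K '' S = (fun s ↦ monomial s 1) '' (e.symm '' S) := by
    simp only [Set.image_image, mono_eq_monomial, e]
  have hp : e.symm p ∈ (mono K p - mono K q).support := by
    rw [mem_support_iff, coeff_sub, mono_eq_monomial, mono_eq_monomial, coeff_monomial,
      coeff_monomial, if_pos rfl, if_neg (e.symm.injective.ne hne.symm), sub_zero]
    exact one_ne_zero
  rw [hS, mem_ideal_span_monomial_image] at h
  obtain ⟨_, ⟨s, hs, rfl⟩, hle⟩ := h _ hp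
  exact ⟨s, hs, hle⟩

end LatticeIdeal

section IndispensableMonomials

variable {K} {m : ℕ} {L : AddSubgroup (Fin m → ℤ)} {w : Fin m → ℕ}

/-- The exponents of the monomials occurring in nonzero binomials of `I_L`. -/
def binomialExponents (L : AddSubgroup (Fin m → ℤ)) : Set (Fin m → ℕ) :=
  {w | ∃ v, v ≠ w ∧ latticeDegree L w = latticeDegree L v}

theorem IsIndispMonomial.mem_binomialExponents (h : IsIndispMonomial K L w) :
    w ∈ binomialExponents L := by
  obtain ⟨f, ⟨hfL, hf0⟩, v, hfv⟩ := h
    ({f | ∃ u ∈ L, f = mono K (intPos u) - mono K (intNeg u)} \ {0})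
    (fun _ ⟨⟨u, _, hf⟩, _⟩ ↦ ⟨intPos u, intNeg u, hf⟩) Ideal.span_sdiff_singleton_zero
  have hfI : f ∈ latticeIdeal K L := Ideal.subset_span hfL
  refine ⟨v, ?_, ?_⟩
  · rintro rfl
    exact hf0 (by simpa using hfv)
  · rcases hfv with rfl | rfl
    · exact mono_sub_mono_mem_latticeIdeal_iff.mp hfI
    · exact (mono_sub_mono_mem_latticeIdeal_iff.mp hfI).symm

theorem isIndispMonomial_of_minimal (h : Minimal (· ∈ binomialExponents L) w) :
    IsIndispMonomial K L w := by
  intro B hBbinom hB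
  by_contra! hw
  let J := Ideal.span (mono K '' {v | v ∈ binomialExponents L ∧ v ≠ w})
  have hBJ : Ideal.span B ≤ J := by
    refine Ideal.span_le.mpr fun f hf ↦ ?_
    obtain ⟨p, q, rfl⟩ := hBbinom f hf
    have hdeg : latticeDegree L p = latticeDegree L q :=
      mono_sub_mono_mem_latticeIdeal_iff.mp (hB ▸ Ideal.subset_span hf)
    rcases eq_or_ne p q with rfl | hpq
    · rw [sub_self]
      exact J.zero_mem
    · refine J.sub_mem (Ideal.subset_span ⟨p, ⟨⟨q, hpq.symm, hdeg⟩, ?_⟩, rfl⟩)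
        (Ideal.subset_span ⟨q, ⟨⟨p, hpq, hdeg.symm⟩, ?_⟩, rfl⟩)
      · rintro rfl
        exact (hw _ hf q).1 rfl
      · rintro rfl
        exact (hw _ hf p).2 rfl
  obtain ⟨v, hvw, hdeg⟩ := h.prop
  have hmem : mono K w - mono K v ∈ J :=
    hBJ (hB ▸ mono_sub_mono_mem_latticeIdeal_iff.mpr hdeg)
  obtain ⟨s, ⟨hs, hsw⟩, hle⟩ := exists_le_of_mono_sub_mono_mem_span_mono hvw.symm hmem
  exact hsw (h.eq_of_le hs hle)

theorem intPos_mem_binomialExponents {u : Fin m → ℤ} (hu : u ∈ L) (hu0 : u ≠ 0) :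
    intPos u ∈ binomialExponents L := by
  refine ⟨intNeg u, fun h ↦ hu0 (funext fun i ↦ ?_), latticeDegree_intPos_eq_intNeg_iff.mpr hu⟩
  have hi : (-u i).toNat = (u i).toNat := congrFun h i
  change u i = 0
  omega

end IndispensableMonomials

section Supports

variable {K} {m : ℕ} {L : AddSubgroup (Fin m → ℤ)} {E : Set (Fin m)}

theorem exists_mem_Csupp_subset (hE : E ∈ Tsupp K L) : ∃ E' ∈ Csupp L, E' ⊆ E := by
  obtain ⟨w, hw, rfl⟩ := hE
  obtain ⟨v, hvw, hdeg⟩ := hw.mem_binomialExponents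
  set u : Fin m → ℤ := fun i ↦ (w i : ℤ) - v i with hu
  have huL : u ∈ satL L := mem_satL_iff.mpr (le_saturation L (latticeDegree_eq_iff.mp hdeg))
  have hu0 : u ≠ 0 := by
    contrapose! hvw
    ext i
    have hi : (w i : ℤ) - v i = 0 := congrFun hvw i
    omega
  obtain ⟨c, hc, hcu⟩ := exists_isCircuit_conformal huL hu0
  have huw : suppN (intPos u) ⊆ suppN w := by
    intro i
    simp only [suppN, intPos, hu, Set.mem_ofPred_eq]
    omega
  exact ⟨_, ⟨c, hc, .inl rfl⟩, hcu.suppN_intPos_subset.trans huw⟩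

theorem exists_mem_Tsupp_subset_suppN_intPos {u : Fin m → ℤ} (hu : u ∈ satL L) (hu0 : u ≠ 0) :
    ∃ E ∈ Tsupp K L, E ⊆ suppN (intPos u) := by
  obtain ⟨n, hn, hnu⟩ := mem_saturation_iff_exists_nsmul.mp (mem_satL_iff.mp hu)
  have hnu0 : n • u ≠ 0 := smul_ne_zero hn.ne' hu0
  obtain ⟨w, hle, hmin⟩ := exists_minimal_le_of_wellFoundedLT (· ∈ binomialExponents L) _
    (intPos_mem_binomialExponents hnu hnu0)
  refine ⟨_, ⟨w, isIndispMonomial_of_minimal hmin, rfl⟩, fun i (hi : w i ≠ 0) ↦ ?_⟩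
  have hnui : 0 < (n : ℤ) * u i := by
    have hi' : w i ≤ ((n • u) i).toNat := hle i
    rw [Pi.smul_apply, nsmul_eq_mul] at hi'
    omega
  have hui : 0 < u i := pos_of_mul_pos_right hnui (Int.natCast_nonneg n)
  change (u i).toNat ≠ 0
  omega

theorem exists_mem_Tsupp_subset (hE : E ∈ Csupp L) : ∃ E' ∈ Tsupp K L, E' ⊆ E := by
  obtain ⟨u, ⟨hu0, hu, -⟩, rfl | rfl⟩ := hE
  · exact exists_mem_Tsupp_subset_suppN_intPos hu hu0
  · rw [mem_satL_iff, ← neg_mem_iff, ← mem_satL_iff] at hu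
    exact exists_mem_Tsupp_subset_suppN_intPos hu (neg_ne_zero.mpr hu0)

end Supports

theorem stmt1_general {m : ℕ} (L : AddSubgroup (Fin m → ℤ)) : Tmin K L = Cmin L := by
  ext E
  rw [mem_Tmin_iff_minimal, mem_Cmin_iff_minimal]
  exact minimal_iff_minimal_of_forall_exists_le
    (fun _ hE ↦ (exists_mem_Csupp_subset hE).imp fun _ h ↦ h.symm)
    (fun _ hE ↦ (exists_mem_Tsupp_subset hE).imp fun _ h ↦ h.symm)

theorem stmt1 {m : ℕ} (L : AddSubgroup (Fin m → ℤ))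
    (hL0 : L ≠ ⊥) (hLpos : ∀ u ∈ L, (∀ i, 0 ≤ u i) → u = 0) :
    Tmin K L = Cmin L :=
  stmt1_general K L
end

section
/- Let K be any field and L ⊆ ℤ^m a nonzero positive lattice. If rad(I_L) = rad((F_1,…,F_s)) for some polynomials F_1,…,F_s ∈ I_L, then for every E ∈ T_min there exist an index j ∈ {1,…,s} and a monomial M appearing with nonzero coefficient in F_j such that supp(M) = E. -/
open MvPolynomial

variable (K : Type*) [Field K]

/-!
Setting to zero the variables outside the support of a monomial `x^a` is a ring homomorphism, and
it kills exactly the polynomials none of whose monomials has support inside `supp(x^a)`. Its target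
is reduced, so if `x^a` occurs in an element of `rad(F_1, …, F_s)`, then some `F_j` has a monomial
whose support lies in `supp(x^a)`.

Every monomial of an element of `I_L` is divisible by a minimal generator of the monomial ideal
`(x^{u⁺} : 0 ≠ u ∈ L)`, and these minimal generators are indispensable. So if `E = supp(x^a)` is
minimal in `T`, the support of that monomial of `F_j` contains an element of `T` contained in `E`,
and all three sets coincide.
-/

theorem exists_mem_support_le_of_mem_span {σ R : Type*} [CommSemiring R]
    {S : Set (MvPolynomial σ R)} {f : MvPolynomial σ R} (hf : f ∈ Ideal.span S) {a : σ →₀ ℕ}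
    (ha : a ∈ f.support) : ∃ g ∈ S, ∃ b ∈ g.support, b ≤ a := by
  have hS : Ideal.span S ≤
      Ideal.span ((fun b => monomial b (1 : R)) '' {b | ∃ g ∈ S, b ∈ g.support}) :=
    Ideal.span_le.2 fun g hg => mem_ideal_span_monomial_image.2 fun b hb =>
      ⟨b, ⟨g, hg, hb⟩, le_rfl⟩
  obtain ⟨b, ⟨g, hg, hb⟩, hba⟩ := mem_ideal_span_monomial_image.1 (hS hf) a ha
  exact ⟨g, hg, b, hb, hba⟩

theorem killCompl_eq_zero_iff {σ τ R : Type*} [CommSemiring R] {f : σ → τ}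
    (hf : Function.Injective f) {p : MvPolynomial τ R} :
    killCompl hf p = 0 ↔ ∀ a ∈ p.support, ¬ (a.support : Set τ) ⊆ Set.range f := by
  simp only [← support_eq_empty, support_killCompl, Finset.eq_empty_iff_forall_notMem,
    Finset.mem_preimage]
  refine ⟨fun h a ha hsub => h (a.comapDomain f hf.injOn) ?_, fun h b hb => h _ hb ?_⟩
  · rwa [Finsupp.mapDomain_comapDomain f hf a hsub]
  · exact fun i hi => by_contra fun hif =>
      Finsupp.mem_support_iff.1 hi (Finsupp.mapDomain_of_notMem_range b i hif)

theorem exists_support_subset_of_mem_radical_span {σ R : Type*} [CommRing R] [IsReduced R]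
    {S : Set (MvPolynomial σ R)} {f : MvPolynomial σ R} (hf : f ∈ (Ideal.span S).radical)
    {a : σ →₀ ℕ} (ha : a ∈ f.support) : ∃ g ∈ S, ∃ b ∈ g.support, b.support ⊆ a.support := by
  by_contra! hS
  have hinj : Function.Injective (Subtype.val : ((a.support : Set σ) : Type _) → σ) :=
    Subtype.val_injective
  let φ := killCompl (R := R) hinj
  have hker : Ideal.span S ≤ RingHom.ker φ := Ideal.span_le.2 fun g hg =>
    (killCompl_eq_zero_iff hinj).2 fun b hb => by
      rw [Subtype.range_coe, Finset.coe_subset]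
      exact hS g hg b hb
  obtain ⟨n, hn⟩ := hf
  have hφf : φ f = 0 := eq_zero_of_pow_eq_zero ((map_pow φ f n).symm.trans (hker hn))
  exact (killCompl_eq_zero_iff hinj).1 hφf a ha Subtype.range_coe.ge

section LatticeIdeal

variable {K} {m : ℕ} {L : AddSubgroup (Fin m → ℤ)}

theorem intPos_eq_intNeg_iff {u : Fin m → ℤ} : intPos u = intNeg u ↔ u = 0 := by
  simp only [funext_iff, intPos, intNeg, Pi.zero_apply]
  exact forall_congr' fun i => by omega

theorem coeff_mono (w : Fin m → ℕ) (a : Fin m →₀ ℕ) :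
    coeff a (mono K w) = if w = a then 1 else 0 := by
  rw [mono, coeff_prod_X_pow]
  exact if_congr (by simp [Finsupp.ext_iff, funext_iff, eq_comm]) rfl rfl

theorem mem_support_mono_sub_mono {p q : Fin m → ℕ} {a : Fin m →₀ ℕ} :
    a ∈ (mono K p - mono K q).support ↔ p ≠ q ∧ (p = a ∨ q = a) := by
  rw [mem_support_iff, coeff_sub, coeff_mono, coeff_mono]
  grind

theorem mono_sub_mono_mem_latticeIdeal {u : Fin m → ℤ} (hu : u ∈ L) :
    mono K (intPos u) - mono K (intNeg u) ∈ latticeIdeal K L :=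
  Ideal.subset_span ⟨u, hu, rfl⟩

/-- The exponents `u⁺`, `0 ≠ u ∈ L`, of the monomials generating the monomial ideal `M_L` attached
to `I_L`. Since `u⁻ = (-u)⁺`, the exponents `u⁻` are included. -/
def posExponents (L : AddSubgroup (Fin m → ℤ)) : Set (Fin m → ℕ) :=
  {w | ∃ u ∈ L, u ≠ 0 ∧ intPos u = w}

theorem exists_mem_posExponents_le {f : MvPolynomial (Fin m) K} (hf : f ∈ latticeIdeal K L)
    {a : Fin m →₀ ℕ} (ha : a ∈ f.support) : ∃ w ∈ posExponents L, w ≤ a := by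
  obtain ⟨_, ⟨u, hu, rfl⟩, b, hb, hba⟩ := exists_mem_support_le_of_mem_span hf ha
  obtain ⟨hne, hub⟩ := mem_support_mono_sub_mono.1 hb
  have hu0 : u ≠ 0 := mt intPos_eq_intNeg_iff.2 hne
  refine ⟨b, ?_, hba⟩
  rcases hub with hpos | hneg
  · exact ⟨u, hu, hu0, hpos⟩
  · exact ⟨-u, neg_mem hu, neg_ne_zero.2 hu0, hneg⟩

theorem isIndispMonomial_of_minimal_s2 {w : Fin m → ℕ} (hw : Minimal (· ∈ posExponents L) w) :
    IsIndispMonomial K L w := by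
  intro B hB hspan
  obtain ⟨⟨u, hu, hu0, rfl⟩, hmin⟩ := hw
  let a : Fin m →₀ ℕ := Finsupp.equivFunOnFinite.symm (intPos u)
  have hua : a ∈ (mono K (intPos u) - mono K (intNeg u)).support :=
    mem_support_mono_sub_mono.2 ⟨mt intPos_eq_intNeg_iff.1 hu0, Or.inl rfl⟩
  obtain ⟨g, hgB, b, hb, hba⟩ :=
    exists_mem_support_le_of_mem_span (hspan ▸ mono_sub_mono_mem_latticeIdeal hu) hua
  have hab : intPos u = b := by
    obtain ⟨v, hv, hvb⟩ := exists_mem_posExponents_le (hspan ▸ Ideal.subset_span hgB) hb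
    exact le_antisymm ((hmin hv (hvb.trans hba)).trans hvb) hba
  obtain ⟨p, q, rfl⟩ := hB g hgB
  rw [hab]
  rcases (mem_support_mono_sub_mono.1 hb).2 with rfl | rfl
  · exact ⟨_, hgB, q, Or.inl rfl⟩
  · exact ⟨_, hgB, p, Or.inr rfl⟩

theorem exists_mem_Tsupp_subset_s2 {f : MvPolynomial (Fin m) K} (hf : f ∈ latticeIdeal K L)
    {a : Fin m →₀ ℕ} (ha : a ∈ f.support) : ∃ E ∈ Tsupp K L, E ⊆ suppN a := by
  obtain ⟨v, hv, hva⟩ := exists_mem_posExponents_le hf ha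
  obtain ⟨w, hwv, hw⟩ := exists_minimal_le_of_wellFoundedLT (· ∈ posExponents L) v hv
  refine ⟨suppN w, ⟨w, isIndispMonomial_of_minimal_s2 hw, rfl⟩, fun i hi => ?_⟩
  exact ((Nat.pos_of_ne_zero hi).trans_le (hwv.trans hva i)).ne'

theorem exists_mem_latticeIdeal_of_isIndispMonomial {a : Fin m →₀ ℕ}
    (ha : IsIndispMonomial K L a) : ∃ f ∈ latticeIdeal K L, a ∈ f.support := by
  -- The zero binomial has to be discarded: in the form `x^a - x^a` it witnesses nothing about `a`.
  obtain ⟨_, ⟨⟨u, hu, rfl⟩, hne⟩, v, hv⟩ := ha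
    ({f | ∃ u ∈ L, f = mono K (intPos u) - mono K (intNeg u)} \ {0})
    (by rintro _ ⟨⟨u, -, rfl⟩, -⟩; exact ⟨_, _, rfl⟩) Ideal.span_sdiff_singleton_zero
  refine ⟨_, mono_sub_mono_mem_latticeIdeal hu, ?_⟩
  have hav : v ≠ a := by
    rintro rfl
    exact hne (by simpa using hv)
  rcases hv with hv | hv <;> rw [hv, mem_support_mono_sub_mono]
  · exact ⟨hav.symm, Or.inl rfl⟩
  · exact ⟨hav, Or.inr rfl⟩

theorem stmt2_general {S : Set (MvPolynomial (Fin m) K)} (hS : ∀ f ∈ S, f ∈ latticeIdeal K L)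
    (hrad : latticeIdeal K L ≤ (Ideal.span S).radical) {E : Set (Fin m)} (hE : E ∈ Tmin K L) :
    ∃ f ∈ S, ∃ b ∈ f.support, suppN b = E := by
  obtain ⟨⟨w, hw, rfl⟩, hmin⟩ := hE
  obtain ⟨a, rfl⟩ := Finsupp.equivFunOnFinite.surjective w
  obtain ⟨f, hf, haf⟩ := exists_mem_latticeIdeal_of_isIndispMonomial hw
  obtain ⟨g, hgS, b, hbg, hba⟩ := exists_support_subset_of_mem_radical_span (hrad hf) haf
  have hba' : suppN b ⊆ suppN a := fun i hi =>
    Finsupp.mem_support_iff.1 (hba (Finsupp.mem_support_iff.2 hi))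
  obtain ⟨E', hE', hE'b⟩ := exists_mem_Tsupp_subset_s2 (hS g hgS) hbg
  have hE'a : E' = suppN a := hmin E' hE' (hE'b.trans hba')
  exact ⟨g, hgS, b, hbg, hba'.antisymm (hE'a ▸ hE'b)⟩

end LatticeIdeal

theorem stmt2 {m : ℕ} (L : AddSubgroup (Fin m → ℤ))
    (hL0 : L ≠ ⊥) (hLpos : ∀ u ∈ L, (∀ i, 0 ≤ u i) → u = 0)
    (s : ℕ) (F : Fin s → MvPolynomial (Fin m) K)
    (hF : ∀ j, F j ∈ latticeIdeal K L)
    (hrad : (latticeIdeal K L).radical = (Ideal.span (Set.range F)).radical)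
    (E : Set (Fin m)) (hE : E ∈ Tmin K L) :
    ∃ j : Fin s, ∃ w : (Fin m) →₀ ℕ,
      MvPolynomial.coeff w (F j) ≠ 0 ∧ {i | w i ≠ 0} = E := by
  obtain ⟨_, ⟨j, rfl⟩, w, hw, hwE⟩ :=
    stmt2_general (Set.forall_mem_range.2 hF) (hrad ▸ Ideal.le_radical) hE
  exact ⟨j, w, mem_support_iff.1 hw, hwE⟩
end
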